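/- arXiv:1702.04168 — 2 statements merged into one kernel-verified Lean document; each statement's English description precedes it below -/
import Mathlib

section
/- Projected entropy is controlled by the spatial Fisher information: there exists a constant C > 0, depending only on d, such that for every smooth h : 𝕋^d × ℝ^d → (0,∞) bounded above and below by positive constants, with bounded gradient and ∫ h dμ = 1, one has ∫_{𝕋^d} Πh log(Πh) dx ≤ C ∫_{𝕋^d × ℝ^d} (|∇_x h|²/h) dμ. -/
/-! The proof combines a logarithmic Sobolev inequality on the unit cube with convexity of the
entropy `ent f = ∫ f log f - (∫ f) log (∫ f)`.

In dimension one, `log t ≤ t - 1` bounds the entropy of `f` by `Var f / ∫ f`; the variance is at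
most the square of the oscillation, hence at most `(∫ |f'|)²`, which Cauchy–Schwarz bounds by
`(∫ f) (∫ f'²/f)`. So `ent f ≤ ∫ f'²/f` on `[0,1]` (`log_sobolev_interval`). Tensorization
(`ent_prod_le`) carries this to the cube with the same constant (`log_sobolev_cube`).

The projection `Πh` is the Gaussian average in `v` of the functions `h(·, v)`, so its entropy is at
most the average of theirs (`ent_integral_le`), to each of which the inequality on the cube applies.
No derivative of `Πh` is needed, and `C = 1` works. -/

open MeasureTheory Real Filter

noncomputable section

/-- The standard Gaussian density `ℳ(v) = (2π)^{-d/2} exp(-|v|²/2)` on `ℝ^d`. -/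
def gauss (d : ℕ) (v : Fin d → ℝ) : ℝ :=
  (2 * Real.pi) ^ (-(d : ℝ) / 2) * Real.exp (-(∑ i, v i ^ 2) / 2)

/-- Fundamental domain `[0,1]^d` of the torus `𝕋^d`; the normalized Lebesgue measure on
the torus is the restriction of Lebesgue measure to this cube. -/
def cube (d : ℕ) : Set (Fin d → ℝ) := Set.Icc 0 1

/-- A function of `(x,v)` represents a function on `𝕋^d × ℝ^d` iff it is `ℤ^d`-periodic in `x`. -/
def IsPeriodic (d : ℕ) (f : (Fin d → ℝ) → (Fin d → ℝ) → ℝ) : Prop :=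
  ∀ (x v : Fin d → ℝ) (k : Fin d → ℤ), f (x + fun i => (k i : ℝ)) v = f x v

/-- The projection `Πf(x) = ∫ f(x,u) ℳ(u) du`. -/
def proj (d : ℕ) (f : (Fin d → ℝ) → (Fin d → ℝ) → ℝ) (x : Fin d → ℝ) : ℝ :=
  ∫ u, f x u * gauss d u

/-- Euclidean dot product on `ℝ^d`. -/
def dotp (d : ℕ) (a b : Fin d → ℝ) : ℝ := ∑ i, a i * b i

/-- Squared Euclidean norm on `ℝ^d`. -/
def nsq (d : ℕ) (a : Fin d → ℝ) : ℝ := ∑ i, a i ^ 2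

/-- Gradient in the `x` variable. -/
def gradx (d : ℕ) (f : (Fin d → ℝ) → (Fin d → ℝ) → ℝ) (x v : Fin d → ℝ) : Fin d → ℝ :=
  fun i => fderiv ℝ (fun y => f y v) x (Pi.single i 1)

/-- Gradient in the `v` variable. -/
def gradv (d : ℕ) (f : (Fin d → ℝ) → (Fin d → ℝ) → ℝ) (x v : Fin d → ℝ) : Fin d → ℝ :=
  fun i => fderiv ℝ (fun w => f x w) v (Pi.single i 1)

/-- Gradient of a function of `x` only. -/
def grad1 (d : ℕ) (g : (Fin d → ℝ) → ℝ) (x : Fin d → ℝ) : Fin d → ℝ :=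
  fun i => fderiv ℝ g x (Pi.single i 1)

/-- Laplacian in the `v` variable. -/
def lapv (d : ℕ) (f : (Fin d → ℝ) → (Fin d → ℝ) → ℝ) (x v : Fin d → ℝ) : ℝ :=
  ∑ i, fderiv ℝ (fun w => gradv d f x w i) v (Pi.single i 1)

/-- Integral against `μ = ℳ(v) dv dx` on `𝕋^d × ℝ^d`. -/
def intMu (d : ℕ) (F : (Fin d → ℝ) → (Fin d → ℝ) → ℝ) : ℝ :=
  ∫ x in cube d, ∫ v, F x v * gauss d v

/-- `I^X(h) = ∫ |∇_x h|²/h dμ`. -/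
def IX (d : ℕ) (h : (Fin d → ℝ) → (Fin d → ℝ) → ℝ) : ℝ :=
  intMu d fun x v => nsq d (gradx d h x v) / h x v

/-- `I^V(h) = ∫ |∇_v h|²/h dμ`. -/
def IV (d : ℕ) (h : (Fin d → ℝ) → (Fin d → ℝ) → ℝ) : ℝ :=
  intMu d fun x v => nsq d (gradv d h x v) / h x v

/-- `I^M(h) = ∫ (∇_x h · ∇_v h)/h dμ`. -/
def IM (d : ℕ) (h : (Fin d → ℝ) → (Fin d → ℝ) → ℝ) : ℝ :=
  intMu d fun x v => dotp d (gradx d h x v) (gradv d h x v) / h x v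

/-- The full Fisher information `I(h) = ∫ |∇_{x,v} h|²/h dμ`. -/
def Ifull (d : ℕ) (h : (Fin d → ℝ) → (Fin d → ℝ) → ℝ) : ℝ :=
  intMu d fun x v => (nsq d (gradx d h x v) + nsq d (gradv d h x v)) / h x v

/-- `I^{ΠX}(h) = ∫_{𝕋^d} |∇_x Πh|²/Πh dx`. -/
def IPiX (d : ℕ) (h : (Fin d → ℝ) → (Fin d → ℝ) → ℝ) : ℝ :=
  ∫ x in cube d, nsq d (grad1 d (proj d h) x) / proj d h x

/-- `I^{ΠX/X}(h) = ∫ (|∇_x(Πh/h)|²/(Πh/h)) h dμ`. -/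
def IPiXX (d : ℕ) (h : (Fin d → ℝ) → (Fin d → ℝ) → ℝ) : ℝ :=
  intMu d fun x v =>
    nsq d (gradx d (fun y w => proj d h y / h y w) x v) / (proj d h x / h x v) * h x v

/-- `I^{ΠV/V}(h) = ∫ (|∇_v h|²/h)(Πh/h) dμ`. -/
def IPiVV (d : ℕ) (h : (Fin d → ℝ) → (Fin d → ℝ) → ℝ) : ℝ :=
  intMu d fun x v => nsq d (gradv d h x v) / h x v * (proj d h x / h x v)

/-- The relative entropy `H(h) = ∫ h log h dμ`. -/
def Hent (d : ℕ) (h : (Fin d → ℝ) → (Fin d → ℝ) → ℝ) : ℝ :=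
  intMu d fun x v => h x v * Real.log (h x v)

/-- The projected entropy `H_Π(h) = ∫_{𝕋^d} Πh log Πh dx`. -/
def HPi (d : ℕ) (h : (Fin d → ℝ) → (Fin d → ℝ) → ℝ) : ℝ :=
  ∫ x in cube d, proj d h x * Real.log (proj d h x)

/-- The local average speed `U(x) = ∫ v h(x,v) ℳ(v) dv`. -/
def Uvec (d : ℕ) (h : (Fin d → ℝ) → (Fin d → ℝ) → ℝ) (x : Fin d → ℝ) : Fin d → ℝ :=
  fun i => ∫ v, v i * h x v * gauss d v

/-- The divergence `∇_x · U`. -/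
def divU (d : ℕ) (h : (Fin d → ℝ) → (Fin d → ℝ) → ℝ) (x : Fin d → ℝ) : ℝ :=
  ∑ i, fderiv ℝ (fun y => Uvec d h y i) x (Pi.single i 1)

/-- The `p`-entropy `H^{(p)}(h) = ∫ (h^p - h)/(p(p-1)) dμ`. -/
def Hp (d : ℕ) (p : ℝ) (h : (Fin d → ℝ) → (Fin d → ℝ) → ℝ) : ℝ :=
  intMu d fun x v => (h x v ^ p - h x v) / (p * (p - 1))

/-- The projected `p`-entropy `H_Π^{(p)}(h) = ∫_{𝕋^d} ((Πh)^p - Πh)/(p(p-1)) dx`. -/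
def HpPi (d : ℕ) (p : ℝ) (h : (Fin d → ℝ) → (Fin d → ℝ) → ℝ) : ℝ :=
  ∫ x in cube d, ((proj d h x) ^ p - proj d h x) / (p * (p - 1))

/-- The `p`-Fisher information `I^{(p)}(h) = ∫ h^{p-2} |∇_{x,v} h|² dμ`. -/
def Ipfull (d : ℕ) (p : ℝ) (h : (Fin d → ℝ) → (Fin d → ℝ) → ℝ) : ℝ :=
  intMu d fun x v => h x v ^ (p - 2) * (nsq d (gradx d h x v) + nsq d (gradv d h x v))

/-- The spatial `p`-Fisher information `∫ h^{p-2} |∇_x h|² dμ`. -/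
def IpX (d : ℕ) (p : ℝ) (h : (Fin d → ℝ) → (Fin d → ℝ) → ℝ) : ℝ :=
  intMu d fun x v => h x v ^ (p - 2) * nsq d (gradx d h x v)

/-- Regularity of a time-dependent `h`: smooth, periodic in `x`, bounded above and below by
positive constants, with all partial derivatives bounded. -/
def Regular (d : ℕ) (h : ℝ → (Fin d → ℝ) → (Fin d → ℝ) → ℝ) : Prop :=
  ContDiff ℝ (⊤ : ℕ∞) (fun q : ℝ × (Fin d → ℝ) × (Fin d → ℝ) => h q.1 q.2.1 q.2.2) ∧
  (∀ t, IsPeriodic d (h t)) ∧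
  (∃ c C : ℝ, 0 < c ∧ ∀ t x v, c ≤ h t x v ∧ h t x v ≤ C) ∧
  (∀ n : ℕ, ∃ C : ℝ, ∀ q : ℝ × (Fin d → ℝ) × (Fin d → ℝ),
    ‖iteratedFDeriv ℝ n (fun r : ℝ × (Fin d → ℝ) × (Fin d → ℝ) => h r.1 r.2.1 r.2.2) q‖ ≤ C)

/-- Regularity of a time-independent `h`: smooth, periodic in `x`, bounded above and below by
positive constants, with bounded gradient. -/
def RegularStatic (d : ℕ) (h : (Fin d → ℝ) → (Fin d → ℝ) → ℝ) : Prop :=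
  ContDiff ℝ (⊤ : ℕ∞) (fun q : (Fin d → ℝ) × (Fin d → ℝ) => h q.1 q.2) ∧
  IsPeriodic d h ∧
  (∃ c C : ℝ, 0 < c ∧ ∀ x v, c ≤ h x v ∧ h x v ≤ C) ∧
  (∃ C : ℝ, ∀ q : (Fin d → ℝ) × (Fin d → ℝ),
    ‖fderiv ℝ (fun r : (Fin d → ℝ) × (Fin d → ℝ) => h r.1 r.2) q‖ ≤ C)

/-- `h` solves the linear relaxation Boltzmann equation `∂_t h + v·∇_x h = λ(Πh - h)` for `t ≥ 0`. -/
def SolvesLRB (d : ℕ) (lam : ℝ) (h : ℝ → (Fin d → ℝ) → (Fin d → ℝ) → ℝ) : Prop :=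
  ∀ t x v, 0 ≤ t →
    deriv (fun s => h s x v) t + dotp d v (gradx d (h t) x v)
      = lam * (proj d (h t) x - h t x v)

/-- `h` solves the free transport equation `∂_t h + v·∇_x h = 0` for `t ≥ 0`. -/
def SolvesTransport (d : ℕ) (h : ℝ → (Fin d → ℝ) → (Fin d → ℝ) → ℝ) : Prop :=
  ∀ t x v, 0 ≤ t →
    deriv (fun s => h s x v) t + dotp d v (gradx d (h t) x v) = 0

/-- `h` solves the pure relaxation equation `∂_t h = λ(Πh - h)` for `t ≥ 0`. -/
def SolvesCollision (d : ℕ) (lam : ℝ) (h : ℝ → (Fin d → ℝ) → (Fin d → ℝ) → ℝ) : Prop :=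
  ∀ t x v, 0 ≤ t →
    deriv (fun s => h s x v) t = lam * (proj d (h t) x - h t x v)

/-- `h` solves the kinetic Fokker–Planck equation `∂_t h + v·∇_x h = Δ_v h - v·∇_v h` for `t ≥ 0`. -/
def SolvesKFP (d : ℕ) (h : ℝ → (Fin d → ℝ) → (Fin d → ℝ) → ℝ) : Prop :=
  ∀ t x v, 0 ≤ t →
    deriv (fun s => h s x v) t + dotp d v (gradx d (h t) x v)
      = lapv d (h t) x v - dotp d v (gradv d (h t) x v)

/-! ### Entropy of a positive function -/

/-- The entropy `∫ f log f dμ - (∫ f dμ) log (∫ f dμ)` of a positive function `f` with respect to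
a probability measure `μ`; it is convex and `1`-homogeneous in `f`. -/
def ent {α : Type*} [MeasurableSpace α] (μ : Measure α) (f : α → ℝ) : ℝ :=
  (∫ x, f x * Real.log (f x) ∂μ) - (∫ x, f x ∂μ) * Real.log (∫ x, f x ∂μ)

lemma integrable_of_abs_le {α : Type*} [MeasurableSpace α] {μ : Measure α} [IsFiniteMeasure μ]
    {f : α → ℝ} (hf : Measurable f) (K : ℝ) (hK : ∀ x, |f x| ≤ K) : Integrable f μ :=
  Integrable.of_bound hf.aestronglyMeasurable K (Eventually.of_forall hK)

lemma abs_log_le {c C a : ℝ} (hc : 0 < c) (h1 : c ≤ a) (h2 : a ≤ C) :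
    |Real.log a| ≤ |Real.log c| + |Real.log C| := by
  have h3 := Real.log_le_log hc h1
  have h4 := Real.log_le_log (hc.trans_le h1) h2
  rw [abs_le]
  constructor
  · linarith [neg_abs_le (Real.log c), abs_nonneg (Real.log C)]
  · linarith [le_abs_self (Real.log C), abs_nonneg (Real.log c)]

lemma abs_mul_log_le {c C a b : ℝ} (hc : 0 < c) (h1 : c ≤ a) (h2 : a ≤ C)
    (h3 : c ≤ b) (h4 : b ≤ C) :
    |a * Real.log b| ≤ C * (|Real.log c| + |Real.log C|) := by
  rw [abs_mul, abs_of_pos (hc.trans_le h1)]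
  exact mul_le_mul h2 (abs_log_le hc h3 h4) (abs_nonneg _) (by linarith)

lemma integral_mem_bounds {α : Type*} [MeasurableSpace α] {μ : Measure α} [IsProbabilityMeasure μ]
    {f : α → ℝ} {c C : ℝ} (hf : Integrable f μ) (hb : ∀ x, c ≤ f x ∧ f x ≤ C) :
    c ≤ ∫ x, f x ∂μ ∧ ∫ x, f x ∂μ ≤ C := by
  constructor
  · have := integral_mono (integrable_const c) hf (fun x => (hb x).1)
    simpa using this
  · have := integral_mono hf (integrable_const C) (fun x => (hb x).2)
    simpa using this

/-- Tangent line inequality for `a ↦ a log a`, in the form that is homogeneous in `(a, b)`. -/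
lemma sub_le_mul_log_sub {a b : ℝ} (ha : 0 < a) (hb : 0 < b) :
    a - b ≤ a * Real.log a - a * Real.log b := by
  have h := Real.log_le_sub_one_of_pos (div_pos hb ha)
  rw [Real.log_div hb.ne' ha.ne'] at h
  have h2 := mul_le_mul_of_nonneg_left h ha.le
  have h3 : a * (b / a - 1) = b - a := by field_simp
  linarith

section Product

variable {α β : Type*} [MeasurableSpace α] [MeasurableSpace β]
  {μ : Measure α} {ν : Measure β} [IsProbabilityMeasure μ] [IsProbabilityMeasure ν]
  {f : α → β → ℝ} {c C : ℝ}

lemma integrable_mul_log {f : α → ℝ} (hf : Measurable f) (hc : 0 < c)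
    (hb : ∀ x, c ≤ f x ∧ f x ≤ C) : Integrable (fun x => f x * Real.log (f x)) μ :=
  integrable_of_abs_le (hf.mul hf.log) _
    (fun x => abs_mul_log_le hc (hb x).1 (hb x).2 (hb x).1 (hb x).2)

lemma integrable_of_bounds {f : α → ℝ} (hf : Measurable f) (hc : 0 < c)
    (hb : ∀ x, c ≤ f x ∧ f x ≤ C) : Integrable f μ :=
  integrable_of_abs_le hf C
    (fun x => by rw [abs_of_pos (hc.trans_le (hb x).1)]; exact (hb x).2)

lemma integrable_ent (hf : Measurable (Function.uncurry f)) (hc : 0 < c)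
    (hb : ∀ x y, c ≤ f x y ∧ f x y ≤ C) : Integrable (fun x => ent ν (f x)) μ := by
  have hm : Measurable (fun x => ∫ y, f x y ∂ν) :=
    (hf.stronglyMeasurable.integral_prod_right (ν := ν)).measurable
  have hmb : ∀ x, c ≤ ∫ y, f x y ∂ν ∧ ∫ y, f x y ∂ν ≤ C := fun x =>
    integral_mem_bounds (integrable_of_bounds (hf.comp measurable_prodMk_left) hc (hb x)) (hb x)
  have hL : Integrable (fun p : α × β => f p.1 p.2 * Real.log (f p.1 p.2)) (μ.prod ν) :=
    integrable_mul_log hf hc (fun p => hb p.1 p.2)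
  exact hL.integral_prod_left.sub (integrable_mul_log hm hc hmb)

/-- Convexity of the entropy, in integral form: the entropy of an average is at most the average
of the entropies. With `F = ∫ f(x, ·) dμ(x)`, this is the variational bound
`∫ f(x, ·) log F dν ≤ ent (f x) + (∫ f(x, ·) dν) log (∫ F dν)` integrated in `x`. -/
lemma ent_integral_le (hf : Measurable (Function.uncurry f)) (hc : 0 < c)
    (hb : ∀ x y, c ≤ f x y ∧ f x y ≤ C) :
    ent ν (fun y => ∫ x, f x y ∂μ) ≤ ∫ x, ent ν (f x) ∂μ := by
  set F : β → ℝ := fun y => ∫ x, f x y ∂μ with hF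
  set m : α → ℝ := fun x => ∫ y, f x y ∂ν with hm_def
  have hfx : ∀ x, Measurable (f x) := fun x => hf.comp measurable_prodMk_left
  have hfy : ∀ y, Measurable (fun x => f x y) := fun y => hf.comp measurable_prodMk_right
  have hFm : Measurable F := (hf.stronglyMeasurable.integral_prod_left (μ := μ)).measurable
  have hmm : Measurable m := (hf.stronglyMeasurable.integral_prod_right (ν := ν)).measurable
  have hFb : ∀ y, c ≤ F y ∧ F y ≤ C := fun y =>
    integral_mem_bounds (integrable_of_bounds (hfy y) hc (fun x => hb x y)) (fun x => hb x y)
  have hmb : ∀ x, c ≤ m x ∧ m x ≤ C := fun x =>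
    integral_mem_bounds (integrable_of_bounds (hfx x) hc (hb x)) (hb x)
  have hFi : Integrable F ν := integrable_of_bounds hFm hc hFb
  have hmi : Integrable m μ := integrable_of_bounds hmm hc hmb
  set M : ℝ := ∫ y, F y ∂ν with hM
  have hMb : c ≤ M ∧ M ≤ C := integral_mem_bounds hFi hFb
  have hMpos : 0 < M := hc.trans_le hMb.1
  have hfi : Integrable (Function.uncurry f) (μ.prod ν) :=
    integrable_of_bounds hf hc (fun p => hb p.1 p.2)
  have hmM : ∫ x, m x ∂μ = M := integral_integral_swap hfi
  have hfL : Integrable (Function.uncurry fun x y => f x y * Real.log (F y)) (μ.prod ν) := by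
    refine integrable_of_abs_le (hf.mul (hFm.comp measurable_snd).log)
      (C * (|Real.log c| + |Real.log C|)) ?_
    rintro ⟨x, y⟩
    exact abs_mul_log_le hc (hb x y).1 (hb x y).2 (hFb y).1 (hFb y).2
  have key : ∀ x, ∫ y, f x y * Real.log (F y) ∂ν ≤ ent ν (f x) + m x * Real.log M := by
    intro x
    have hmx : 0 < m x := hc.trans_le (hmb x).1
    have hi1 : Integrable (f x) ν := integrable_of_bounds (hfx x) hc (hb x)
    have hi2 : Integrable (fun y => f x y * Real.log (f x y)) ν :=
      integrable_mul_log (hfx x) hc (hb x)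
    have hi3 : Integrable (fun y => f x y * Real.log (F y)) ν :=
      integrable_of_abs_le ((hfx x).mul hFm.log) _
        (fun y => abs_mul_log_le hc (hb x y).1 (hb x y).2 (hFb y).1 (hFb y).2)
    have pw : ∀ y, f x y * Real.log (F y) ≤
        f x y * Real.log (f x y) - f x y * (Real.log (m x) - Real.log M)
          - f x y + F y * (m x / M) := by
      intro y
      have hFy : 0 < F y := hc.trans_le (hFb y).1
      have h := sub_le_mul_log_sub (hc.trans_le (hb x y).1) (mul_pos hFy (div_pos hmx hMpos))
      rw [Real.log_mul hFy.ne' (div_pos hmx hMpos).ne', Real.log_div hmx.ne' hMpos.ne'] at h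
      linarith
    have h := integral_mono hi3
      (((hi2.sub (hi1.mul_const (Real.log (m x) - Real.log M))).sub hi1).add
        (hFi.mul_const (m x / M))) pw
    have e : ∫ y, (f x y * Real.log (f x y) - f x y * (Real.log (m x) - Real.log M)
          - f x y + F y * (m x / M)) ∂ν
        = (∫ y, f x y * Real.log (f x y) ∂ν) - m x * (Real.log (m x) - Real.log M)
          - m x + M * (m x / M) := by
      have hi4 : Integrable
          (fun y => f x y * Real.log (f x y) - f x y * (Real.log (m x) - Real.log M)) ν :=
        hi2.sub (hi1.mul_const _)
      have hi5 : Integrable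
          (fun y => f x y * Real.log (f x y) - f x y * (Real.log (m x) - Real.log M) - f x y) ν :=
        hi4.sub hi1
      rw [integral_add hi5 (hFi.mul_const _), integral_sub hi4 hi1,
        integral_sub hi2 (hi1.mul_const _), integral_mul_const, integral_mul_const]
    have h' := h.trans_eq e
    rw [mul_div_cancel₀ _ hMpos.ne'] at h'
    simp only [ent]
    change _ ≤ (_ - m x * Real.log (m x)) + _
    linarith
  have hE := integrable_ent (μ := μ) (ν := ν) hf hc hb
  have h1 := integral_mono hfL.integral_prod_left (hE.add (hmi.mul_const (Real.log M))) key
  have h2 : ∫ x, (ent ν (f x) + m x * Real.log M) ∂μ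
      = (∫ x, ent ν (f x) ∂μ) + M * Real.log M := by
    rw [integral_add hE (hmi.mul_const _), integral_mul_const, hmM]
  have h3 : ∫ x, ∫ y, f x y * Real.log (F y) ∂ν ∂μ = ∫ y, F y * Real.log (F y) ∂ν := by
    rw [integral_integral_swap hfL]
    simp only [integral_mul_const, hF]
  have h4 := h1.trans_eq h2
  have h5 : ∫ y, F y * Real.log (F y) ∂ν ≤ (∫ x, ent ν (f x) ∂μ) + M * Real.log M :=
    h3 ▸ h4
  simp only [ent] at h5 ⊢
  linarith

/-- Tensorization (subadditivity) of the entropy for a product of two probability measures. -/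
lemma ent_prod_le (hf : Measurable (Function.uncurry f)) (hc : 0 < c)
    (hb : ∀ x y, c ≤ f x y ∧ f x y ≤ C) :
    ent (μ.prod ν) (Function.uncurry f) ≤
      (∫ y, ent μ (fun x => f x y) ∂ν) + ∫ x, ent ν (f x) ∂μ := by
  have hfy : ∀ y, Measurable (fun x => f x y) := fun y => hf.comp measurable_prodMk_right
  have hFm : Measurable (fun y => ∫ x, f x y ∂μ) :=
    (hf.stronglyMeasurable.integral_prod_left (μ := μ)).measurable
  have hFb : ∀ y, c ≤ ∫ x, f x y ∂μ ∧ ∫ x, f x y ∂μ ≤ C := fun y =>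
    integral_mem_bounds (integrable_of_bounds (hfy y) hc (fun x => hb x y)) (fun x => hb x y)
  have hfi : Integrable (Function.uncurry f) (μ.prod ν) :=
    integrable_of_bounds hf hc (fun p => hb p.1 p.2)
  have hL : Integrable (fun p : α × β => f p.1 p.2 * Real.log (f p.1 p.2)) (μ.prod ν) :=
    integrable_mul_log hf hc (fun p => hb p.1 p.2)
  have h1 := ent_integral_le (μ := μ) (ν := ν) hf hc hb
  have e1 : ∫ y, ent μ (fun x => f x y) ∂ν = (∫ y, ∫ x, f x y * Real.log (f x y) ∂μ ∂ν)
      - ∫ y, (∫ x, f x y ∂μ) * Real.log (∫ x, f x y ∂μ) ∂ν :=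
    integral_sub hL.integral_prod_right (integrable_mul_log hFm hc hFb)
  have e2 : ent (μ.prod ν) (Function.uncurry f) = (∫ y, ∫ x, f x y * Real.log (f x y) ∂μ ∂ν)
      - (∫ y, ∫ x, f x y ∂μ ∂ν) * Real.log (∫ y, ∫ x, f x y ∂μ ∂ν) := by
    have a1 : ∫ p, f p.1 p.2 * Real.log (f p.1 p.2) ∂μ.prod ν
        = ∫ y, ∫ x, f x y * Real.log (f x y) ∂μ ∂ν := integral_prod_symm _ hL
    have a2 : ∫ p, f p.1 p.2 ∂μ.prod ν = ∫ y, ∫ x, f x y ∂μ ∂ν := integral_prod_symm _ hfi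
    simp only [ent, Function.uncurry]
    rw [a1, a2]
  rw [e1, e2]
  simp only [ent] at h1 ⊢
  linarith

end Product

/-! ### Logarithmic Sobolev inequality on the unit cube -/

/-- Lebesgue measure on `[0,1]`. -/
def unitMeasure : Measure ℝ := volume.restrict (Set.Icc (0 : ℝ) 1)

instance : IsProbabilityMeasure unitMeasure := ⟨by simp [unitMeasure]⟩

/-- On an interval the `L¹` norm of the derivative controls the oscillation. -/
lemma abs_sub_le_integral_deriv {f f' : ℝ → ℝ} (hd : ∀ t, HasDerivAt f (f' t) t)
    (hf' : Continuous f') {x y : ℝ} (hx : x ∈ Set.Icc (0 : ℝ) 1) (hy : y ∈ Set.Icc (0 : ℝ) 1) :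
    |f x - f y| ≤ ∫ t, |f' t| ∂unitMeasure := by
  rw [← intervalIntegral.integral_eq_sub_of_hasDerivAt (fun t _ => hd t)
    (hf'.intervalIntegrable y x)]
  refine (intervalIntegral.norm_integral_le_integral_norm_uIoc (f := f')).trans ?_
  refine setIntegral_mono_set (hf'.abs.continuousOn.integrableOn_compact isCompact_Icc)
    (Eventually.of_forall fun t => abs_nonneg _) (LE.le.eventuallyLE ?_)
  exact Set.uIoc_subset_uIcc.trans (Set.uIcc_subset_Icc hy hx)

/-- Logarithmic Sobolev inequality on `[0,1]`, with constant `1`. Writing `m = ∫ f`, the entropy is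
at most `Var f / m`, the variance is at most `(∫ |f'|)²`, and the latter is at most
`m ∫ f'²/f` by Cauchy–Schwarz. -/
lemma log_sobolev_interval {f f' : ℝ → ℝ} {c C K : ℝ} (hc : 0 < c)
    (hb : ∀ t, c ≤ f t ∧ f t ≤ C) (hd : ∀ t, HasDerivAt f (f' t) t) (hf' : Continuous f')
    (hK : ∀ t, |f' t| ≤ K) :
    ent unitMeasure f ≤ ∫ t, f' t ^ 2 / f t ∂unitMeasure := by
  have hfc : Continuous f := continuous_iff_continuousAt.2 fun t => (hd t).continuousAt
  have hpos : ∀ t, 0 < f t := fun t => hc.trans_le (hb t).1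
  have hfi : Integrable f unitMeasure := integrable_of_bounds hfc.measurable hc hb
  have hLi : Integrable (fun t => f t * Real.log (f t)) unitMeasure :=
    integrable_mul_log hfc.measurable hc hb
  have hdi : Integrable (fun t => |f' t|) unitMeasure :=
    integrable_of_abs_le hf'.abs.measurable K (fun t => by rw [abs_abs]; exact hK t)
  have hIi : Integrable (fun t => f' t ^ 2 / f t) unitMeasure := by
    refine integrable_of_abs_le ((hf'.pow 2).measurable.div hfc.measurable) (K ^ 2 / c) ?_
    intro t
    rw [abs_of_nonneg (div_nonneg (sq_nonneg _) (hpos t).le)]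
    have : f' t ^ 2 ≤ K ^ 2 := sq_le_sq' (abs_le.1 (hK t)).1 (abs_le.1 (hK t)).2
    exact div_le_div₀ (sq_nonneg _) this hc (hb t).1
  set m := ∫ t, f t ∂unitMeasure with hm
  set A := ∫ t, |f' t| ∂unitMeasure with hA
  set I := ∫ t, f' t ^ 2 / f t ∂unitMeasure with hI
  have hmpos : 0 < m := hc.trans_le (integral_mem_bounds hfi hb).1
  have hCS : A ^ 2 / m ≤ I := by
    have pw : ∀ t, |f' t| * (2 * (A / m)) ≤ f' t ^ 2 / f t + f t * (A / m) ^ 2 := by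
      intro t
      have h := div_nonneg (sq_nonneg (|f' t| - f t * (A / m))) (hpos t).le
      have e : (|f' t| - f t * (A / m)) ^ 2 / f t
          = f' t ^ 2 / f t + f t * (A / m) ^ 2 - |f' t| * (2 * (A / m)) := by
        rw [← sq_abs (f' t)]
        have := (hpos t).ne'
        field_simp
        ring
      linarith
    have h := integral_mono (hdi.mul_const _) (hIi.add (hfi.mul_const _)) pw
    have e : ∫ t, (f' t ^ 2 / f t + f t * (A / m) ^ 2) ∂unitMeasure = I + m * (A / m) ^ 2 := by
      rw [integral_add hIi (hfi.mul_const _), integral_mul_const]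
    have h2 := h.trans_eq e
    rw [integral_mul_const] at h2
    have e1 : A * (2 * (A / m)) = 2 * (A ^ 2 / m) := by ring
    have e2 : m * (A / m) ^ 2 = A ^ 2 / m := by field_simp
    linarith
  have hae : ∀ᵐ t ∂unitMeasure, t ∈ Set.Icc (0 : ℝ) 1 := ae_restrict_mem measurableSet_Icc
  have hosc : ∀ x ∈ Set.Icc (0 : ℝ) 1, |f x - m| ≤ A := by
    intro x hx
    have e : f x - m = ∫ y, (f x - f y) ∂unitMeasure := by
      rw [integral_sub (integrable_const _) hfi]; simp [hm]
    rw [e]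
    have h := norm_integral_le_of_norm_le_const (μ := unitMeasure) (C := A)
      (f := fun y => f x - f y)
      (hae.mono fun y hy => abs_sub_le_integral_deriv hd hf' hx hy)
    simpa using h
  have pw : ∀ᵐ t ∂unitMeasure,
      f t * Real.log (f t) - f t * Real.log m ≤ A ^ 2 / m + (f t - m) := by
    filter_upwards [hae] with t ht
    have h1 := Real.log_le_sub_one_of_pos (div_pos (hpos t) hmpos)
    rw [Real.log_div (hpos t).ne' hmpos.ne'] at h1
    have h2 := mul_le_mul_of_nonneg_left h1 (hpos t).le
    have h3 : (f t - m) ^ 2 ≤ A ^ 2 :=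
      sq_le_sq' (abs_le.1 (hosc t ht)).1 (abs_le.1 (hosc t ht)).2
    have h4 := div_le_div_of_nonneg_right h3 hmpos.le
    have e : f t * (f t / m - 1) = (f t - m) ^ 2 / m + (f t - m) := by
      field_simp
      ring
    linarith
  have h := integral_mono_ae (hLi.sub (hfi.mul_const _))
    ((integrable_const _).add (hfi.sub (integrable_const _))) pw
  have e1 : ∫ t, (f t * Real.log (f t) - f t * Real.log m) ∂unitMeasure = ent unitMeasure f := by
    rw [integral_sub hLi (hfi.mul_const _), integral_mul_const, ent]
  have e2 : ∫ t, (A ^ 2 / m + (f t - m)) ∂unitMeasure = A ^ 2 / m := by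
    have hi : Integrable (fun t => f t - m) unitMeasure := hfi.sub (integrable_const _)
    rw [integral_add (integrable_const _) hi, integral_sub hfi (integrable_const _)]
    simp [hm]
  have hvar : ent unitMeasure f ≤ A ^ 2 / m := by rw [← e1, ← e2]; exact h
  exact hvar.trans hCS

/-- Lebesgue measure on the unit cube, as a product of copies of `unitMeasure`. -/
def cubeMeasure (d : ℕ) : Measure (Fin d → ℝ) := Measure.pi fun _ => unitMeasure

instance (d : ℕ) : IsProbabilityMeasure (cubeMeasure d) := by
  unfold cubeMeasure; infer_instance

lemma restrict_cube (d : ℕ) : volume.restrict (cube d) = cubeMeasure d := by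
  rw [cube, ← Set.pi_univ_Icc, volume_pi, Measure.restrict_pi_pi]
  rfl

lemma integral_cubeMeasure_succ (d : ℕ) (g : (Fin (d + 1) → ℝ) → ℝ) :
    ∫ x, g x ∂cubeMeasure (d + 1)
      = ∫ p, g (Fin.cons p.1 p.2) ∂(unitMeasure.prod (cubeMeasure d)) := by
  have h := (measurePreserving_piFinSuccAbove (fun _ : Fin (d + 1) => unitMeasure) 0).integral_comp'
    (fun p : ℝ × (Fin d → ℝ) => g (Fin.cons p.1 p.2))
  refine Eq.trans ?_ h
  refine integral_congr_ae (Eventually.of_forall fun x => ?_)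
  change g x = g (Fin.cons (x 0) (Fin.removeNth 0 x))
  congr 1
  exact (Fin.cons_self_tail x).symm

/-- Logarithmic Sobolev inequality on the unit cube, with constant `1` in every dimension, by
tensorization of the one-dimensional inequality. The `D i` are the partial derivatives of `f`. -/
lemma log_sobolev_cube (d : ℕ) {f : (Fin d → ℝ) → ℝ} {D : Fin d → (Fin d → ℝ) → ℝ} {c C K : ℝ}
    (hc : 0 < c) (hf : Continuous f) (hb : ∀ x, c ≤ f x ∧ f x ≤ C)
    (hD : ∀ i, Continuous (D i)) (hK : ∀ i x, |D i x| ≤ K)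
    (hd : ∀ i x, HasDerivAt (fun t => f (Function.update x i t)) (D i x) (x i)) :
    ent (cubeMeasure d) f ≤ ∫ x, (∑ i, D i x ^ 2) / f x ∂cubeMeasure d := by
  induction d with
  | zero =>
    have : ∀ x, f x = f default := fun x => by rw [Subsingleton.elim x default]
    simp [ent, this]
  | succ d ih =>
    set g : ℝ → (Fin d → ℝ) → ℝ := fun t y => f (Fin.cons t y) with hg
    have hcons : Continuous (fun p : ℝ × (Fin d → ℝ) => (Fin.cons p.1 p.2 : Fin (d + 1) → ℝ)) := by
      refine continuous_pi fun i => ?_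
      refine Fin.cases ?_ (fun j => ?_) i
      · simpa using! continuous_fst
      · simpa using! (continuous_apply j).comp continuous_snd
    have hgc : Continuous (Function.uncurry g) := hf.comp hcons
    have hgm := hgc.measurable
    have hgb : ∀ t y, c ≤ g t y ∧ g t y ≤ C := fun t y => hb _
    have hDc : ∀ i, Continuous fun p : ℝ × (Fin d → ℝ) => D i (Fin.cons p.1 p.2) :=
      fun i => (hD i).comp hcons
    have e0 : ent (cubeMeasure (d + 1)) f
        = ent (unitMeasure.prod (cubeMeasure d)) (Function.uncurry g) := by
      simp only [ent, integral_cubeMeasure_succ]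
      rfl
    have hquot : ∀ (i : Fin (d + 1)),
        Integrable (fun p : ℝ × (Fin d → ℝ) => D i (Fin.cons p.1 p.2) ^ 2 / g p.1 p.2)
          (unitMeasure.prod (cubeMeasure d)) := by
      intro i
      refine integrable_of_abs_le (((hDc i).pow 2).measurable.div hgm) (K ^ 2 / c) ?_
      intro p
      have hp := hgb p.1 p.2
      rw [abs_of_nonneg (div_nonneg (sq_nonneg _) (hc.le.trans hp.1))]
      have hk := abs_le.1 (hK i (Fin.cons p.1 p.2))
      exact div_le_div₀ (sq_nonneg _) (sq_le_sq' hk.1 hk.2) hc hp.1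
    have hsum : Integrable (fun p : ℝ × (Fin d → ℝ) =>
        (∑ i : Fin d, D i.succ (Fin.cons p.1 p.2) ^ 2) / g p.1 p.2)
          (unitMeasure.prod (cubeMeasure d)) := by
      simp only [Finset.sum_div]
      exact integrable_finsetSum _ fun i _ => hquot i.succ
    have hfirst : ∀ y, ent unitMeasure (fun t => g t y)
        ≤ ∫ t, D 0 (Fin.cons t y) ^ 2 / g t y ∂unitMeasure := by
      intro y
      refine log_sobolev_interval (K := K) hc (fun t => hgb t y) (fun t => ?_)
        ((hDc 0).comp (Continuous.prodMk_left y)) (fun t => hK 0 _)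
      have h := hd 0 (Fin.cons t y)
      simpa [Fin.update_cons_zero] using h
    have hrest : ∀ t, ent (cubeMeasure d) (g t)
        ≤ ∫ y, (∑ i : Fin d, D i.succ (Fin.cons t y) ^ 2) / g t y ∂cubeMeasure d := by
      intro t
      refine ih (D := fun i y => D i.succ (Fin.cons t y))
        (hgc.comp (Continuous.prodMk_right t)) (hgb t)
        (fun i => (hDc i.succ).comp (Continuous.prodMk_right t)) (fun i y => hK _ _) ?_
      intro i y
      have h := hd i.succ (Fin.cons t y)
      simpa only [← Fin.cons_update, Fin.cons_succ] using h
    have hswap : Measurable (Function.uncurry fun y t => g t y) := hgm.comp measurable_swap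
    have b1 := integral_mono (integrable_ent (ν := unitMeasure) (μ := cubeMeasure d) hswap hc
      (fun y t => hgb t y)) (hquot 0).integral_prod_right hfirst
    have b2 := integral_mono (integrable_ent (μ := unitMeasure) (ν := cubeMeasure d) hgm hc hgb)
      hsum.integral_prod_left hrest
    rw [e0, integral_cubeMeasure_succ]
    refine (ent_prod_le hgm hc hgb).trans ((add_le_add b1 b2).trans_eq ?_)
    rw [← integral_prod_symm _ (hquot 0), ← integral_prod _ hsum,
      ← integral_add (hquot 0) hsum]
    refine integral_congr_ae (Eventually.of_forall fun p => ?_)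
    simp only [Fin.sum_univ_succ, add_div, hg]

/-! ### The Gaussian measure -/

lemma gauss_pos (d : ℕ) (v : Fin d → ℝ) : 0 < gauss d v := by
  unfold gauss; positivity

lemma continuous_gauss (d : ℕ) : Continuous (gauss d) := by
  unfold gauss; fun_prop

lemma integral_gauss (d : ℕ) : ∫ v, gauss d v = 1 := by
  have h1 : ∀ v : Fin d → ℝ, Real.exp (-(∑ i, v i ^ 2) / 2)
      = ∏ i, Real.exp (-(1 / 2) * (v i) ^ 2) := by
    intro v
    rw [← Real.exp_sum, ← Finset.mul_sum]
    congr 1; ring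
  simp only [gauss, h1]
  rw [integral_const_mul,
    integral_fintype_prod_volume_eq_prod (fun (_ : Fin d) (t : ℝ) => Real.exp (-(1 / 2) * t ^ 2))]
  simp only [integral_gaussian, Finset.prod_const, Finset.card_univ, Fintype.card_fin]
  have h2 : Real.pi / (1 / 2) = 2 * Real.pi := by ring
  have hp : (0 : ℝ) < 2 * Real.pi := by positivity
  rw [h2, Real.sqrt_eq_rpow, ← Real.rpow_natCast, ← Real.rpow_mul hp.le, ← Real.rpow_add hp]
  rw [show -(d : ℝ) / 2 + 1 / 2 * d = 0 by ring, Real.rpow_zero]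

/-- The standard Gaussian probability measure `ℳ(v) dv` on `ℝ^d`. -/
def gaussMeasure (d : ℕ) : Measure (Fin d → ℝ) :=
  volume.withDensity fun v => ENNReal.ofReal (gauss d v)

instance (d : ℕ) : IsProbabilityMeasure (gaussMeasure d) := by
  constructor
  have hi : Integrable (gauss d) := by
    by_contra h
    have := integral_gauss d
    rw [integral_undef h] at this
    exact zero_ne_one this
  rw [gaussMeasure, withDensity_apply _ MeasurableSet.univ, Measure.restrict_univ,
    ← ofReal_integral_eq_lintegral_ofReal hi (Eventually.of_forall fun v => (gauss_pos d v).le),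
    integral_gauss, ENNReal.ofReal_one]

lemma integral_gaussMeasure (d : ℕ) (F : (Fin d → ℝ) → ℝ) :
    ∫ v, F v ∂gaussMeasure d = ∫ v, F v * gauss d v := by
  rw [gaussMeasure, integral_withDensity_eq_integral_toReal_smul
    (continuous_gauss d).measurable.ennreal_ofReal (Eventually.of_forall fun v => by simp)]
  refine integral_congr_ae (Eventually.of_forall fun v => ?_)
  simp [ENNReal.toReal_ofReal (gauss_pos d v).le, mul_comm]

lemma intMu_eq (d : ℕ) (F : (Fin d → ℝ) → (Fin d → ℝ) → ℝ) :
    intMu d F = ∫ x, ∫ v, F x v ∂gaussMeasure d ∂cubeMeasure d := by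
  simp only [intMu, restrict_cube, integral_gaussMeasure]

/-- Projected entropy is controlled by the spatial Fisher information:
there is `C > 0` depending only on `d` with
`∫_{𝕋^d} Πh log Πh dx ≤ C ∫ |∇_x h|²/h dμ` for all regular normalized `h`. -/
theorem projected_entropy_le_spatial_fisher (d : ℕ) (hd : 1 ≤ d) :
    ∃ C : ℝ, 0 < C ∧
      ∀ h : (Fin d → ℝ) → (Fin d → ℝ) → ℝ,
        (∀ x v, 0 < h x v) → RegularStatic d h → intMu d h = 1 →
        HPi d h ≤ C * intMu d fun x v => nsq d (gradx d h x v) / h x v := by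
  refine ⟨1, one_pos, ?_⟩
  rintro h - ⟨hsm, -, ⟨c, C, hc, hb⟩, ⟨K, hK⟩⟩ hnorm
  set H : (Fin d → ℝ) × (Fin d → ℝ) → ℝ := fun q => h q.1 q.2 with hH
  have hHd : Differentiable ℝ H := hsm.differentiable (by simp)
  have hHc : Continuous H := hHd.continuous
  -- The spatial partial derivatives, read off from the joint derivative so that joint continuity
  -- and boundedness are immediate.
  set P : Fin d → (Fin d → ℝ) → (Fin d → ℝ) → ℝ :=
    fun i x v => fderiv ℝ H (x, v) (Pi.single i 1, 0) with hP
  have hPc : ∀ i, Continuous (fun q : (Fin d → ℝ) × (Fin d → ℝ) => P i q.1 q.2) := fun i =>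
    (hsm.continuous_fderiv (by simp)).clm_apply continuous_const
  have hPK : ∀ i x v, |P i x v| ≤ K := by
    intro i x v
    have h1 := (fderiv ℝ H (x, v)).le_of_opNorm_le (hK (x, v)) (Pi.single i 1, 0)
    have h2 : ‖((Pi.single i 1 : Fin d → ℝ), (0 : Fin d → ℝ))‖ = 1 := by
      simp [Prod.norm_def, Pi.norm_single]
    rw [h2, mul_one] at h1
    exact h1
  have hgrad : ∀ x v i, gradx d h x v i = P i x v := by
    intro x v i
    have h1 : HasFDerivAt (fun y => h y v)
        ((fderiv ℝ H (x, v)).comp (ContinuousLinearMap.inl ℝ (Fin d → ℝ) (Fin d → ℝ))) x :=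
      HasFDerivAt.comp (g := H) (f := fun y => (y, v)) x (hHd (x, v)).hasFDerivAt
        (hasFDerivAt_prodMk_left x v)
    simp [gradx, h1.fderiv, hP]
  have hder : ∀ v i x, HasDerivAt (fun t => h (Function.update x i t) v) (P i x v) (x i) := by
    intro v i x
    have h1 : HasDerivAt (fun t => (Function.update x i t, v))
        ((Pi.single i 1 : Fin d → ℝ), (0 : Fin d → ℝ)) (x i) :=
      (hasDerivAt_update x i (x i)).prodMk (hasDerivAt_const _ _)
    have h2 : HasFDerivAt H (fderiv ℝ H (x, v)) (Function.update x i (x i), v) := by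
      rw [Function.update_eq_self]; exact (hHd (x, v)).hasFDerivAt
    exact h2.comp_hasDerivAt (x i) h1
  have hsw : Continuous (Function.uncurry fun v x => h x v) := hHc.comp continuous_swap
  have hHPi : HPi d h = ent (cubeMeasure d) (fun x => ∫ v, h x v ∂gaussMeasure d) := by
    rw [intMu_eq] at hnorm
    simp only [ent, hnorm, Real.log_one, mul_zero, sub_zero]
    simp only [HPi, proj, restrict_cube, integral_gaussMeasure]
  have hconv := ent_integral_le (μ := gaussMeasure d) (ν := cubeMeasure d) hsw.measurable hc
    (fun v x => hb x v)
  have hlsi : ∀ v, ent (cubeMeasure d) (fun x => h x v)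
      ≤ ∫ x, (∑ i, P i x v ^ 2) / h x v ∂cubeMeasure d := fun v =>
    log_sobolev_cube d (D := fun i x => P i x v) (K := K) hc
      (hHc.comp (Continuous.prodMk_left v)) (fun x => hb x v)
      (fun i => (hPc i).comp (Continuous.prodMk_left v)) (fun i x => hPK i x v) (hder v)
  have hint : Integrable (Function.uncurry fun v x => (∑ i, P i x v ^ 2) / h x v)
      ((gaussMeasure d).prod (cubeMeasure d)) := by
    have hcont : Continuous fun q : (Fin d → ℝ) × (Fin d → ℝ) => ∑ i, P i q.2 q.1 ^ 2 :=
      continuous_finsetSum _ fun i _ => ((hPc i).comp continuous_swap).pow 2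
    refine integrable_of_abs_le (hcont.measurable.div hsw.measurable)
      ((∑ _i : Fin d, K ^ 2) / c) ?_
    rintro ⟨v, x⟩
    have hs : 0 ≤ ∑ i, P i x v ^ 2 := Finset.sum_nonneg fun i _ => sq_nonneg _
    have hs' : ∑ i, P i x v ^ 2 ≤ ∑ _i : Fin d, K ^ 2 := Finset.sum_le_sum fun i _ =>
      sq_le_sq' (abs_le.1 (hPK i x v)).1 (abs_le.1 (hPK i x v)).2
    change |(∑ i, P i x v ^ 2) / h x v| ≤ _
    rw [abs_of_nonneg (div_nonneg hs (hc.le.trans (hb x v).1))]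
    exact div_le_div₀ (hs.trans hs') hs' hc (hb x v).1
  have hmono := integral_mono (integrable_ent (μ := gaussMeasure d) (ν := cubeMeasure d)
    hsw.measurable hc (fun v x => hb x v)) hint.integral_prod_left hlsi
  rw [one_mul, hHPi, intMu_eq]
  simp only [nsq, hgrad]
  exact (hconv.trans hmono).trans_eq (integral_integral_swap hint)
end
end

section
/- Derivative of the projected entropy along the flow: if h : [0,∞) × 𝕋^d × ℝ^d → ℝ is smooth, bounded above and below by positive constants, has all partial derivatives bounded, satisfies ∫ h(t,·) dμ = 1 for all t, and solves ∂_t h + v·∇_x h = λ(Πh − h) with λ > 0, then for all t ≥ 0, (d/dt) ∫_{𝕋^d} Πh_t log(Πh_t) dx = − ∫_{𝕋^d} log(Πh_t(x)) (∇_x · U_t)(x) dx, where U_t(x) = ∫_{ℝ^d} v h_t(x,v) ℳ(v) dv. -/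
/-!
The local density `Πh` satisfies the conservation law `∂_t Πh + ∇_x · U = 0`
(`Regular.proj_dtime_eq`): averaging the equation against the Gaussian kills the collision term
`λ(Πh - h)` and turns `v · ∇_x h` into the divergence of `U`. Since `Πh` stays between positive
constants and `∂_t Πh` is bounded, one may differentiate under the integral over the cube
(`hasDerivAt_integral_cube`), which gives
`(d/dt) ∫ Πh log Πh dx = ∫ (log Πh + 1) ∂_t Πh dx`.
The contribution of the constant `1` is the time derivative of the total mass, hence zero, and
the conservation law rewrites the rest as `-∫ log(Πh) ∇_x · U dx`.
-/

open MeasureTheory Real Filter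

noncomputable section

/-! ### Moments of the Gaussian weight -/

lemma gauss_eq_prod (d : ℕ) (v : Fin d → ℝ) :
    gauss d v = ∏ i, ProbabilityTheory.gaussianPDFReal 0 1 (v i) := by
  have hpi : (0 : ℝ) ≤ 2 * Real.pi := by positivity
  simp only [gauss, ProbabilityTheory.gaussianPDFReal, Finset.prod_mul_distrib,
    Finset.prod_const, Finset.card_univ, Fintype.card_fin, ← Real.exp_sum]
  congr 1
  · rw [NNReal.coe_one, mul_one, Real.sqrt_eq_rpow, ← Real.rpow_neg hpi, ← Real.rpow_natCast,
      ← Real.rpow_mul hpi]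
    congr 1
    ring
  · congr 1
    simp [neg_div, Finset.sum_div, Finset.sum_neg_distrib]

lemma gauss_nonneg (d : ℕ) (v : Fin d → ℝ) : 0 ≤ gauss d v := by
  unfold gauss
  positivity

lemma integrable_gauss (d : ℕ) : Integrable (gauss d) := by
  have h := Integrable.fintype_prod (μ := fun _ : Fin d => (volume : Measure ℝ))
    (f := fun (_ : Fin d) x => ProbabilityTheory.gaussianPDFReal 0 1 x)
    (fun _ => ProbabilityTheory.integrable_gaussianPDFReal 0 1)
  exact h.congr (ae_of_all _ fun v => (gauss_eq_prod d v).symm)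

lemma integrable_coord_mul_gauss (d : ℕ) (i : Fin d) :
    Integrable (fun v : Fin d → ℝ => v i * gauss d v) := by
  have h := Integrable.fintype_prod (μ := fun _ : Fin d => (volume : Measure ℝ))
    (f := fun (j : Fin d) x =>
      (if j = i then x else 1) * ProbabilityTheory.gaussianPDFReal 0 1 x)
    (fun j => by
      by_cases hj : j = i
      · simp only [hj, if_true]
        refine ((integrable_mul_exp_neg_mul_sq (b := 1 / 2) (by norm_num)).const_mul
          (√(2 * Real.pi))⁻¹).congr (ae_of_all _ fun x => ?_)
        simp only [ProbabilityTheory.gaussianPDFReal, NNReal.coe_one, mul_one, sub_zero]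
        rw [show -(1 / 2 : ℝ) * x ^ 2 = -x ^ 2 / 2 by ring]
        ring
      · simpa [hj] using ProbabilityTheory.integrable_gaussianPDFReal 0 1)
  refine h.congr (ae_of_all _ fun v => ?_)
  simp only [gauss_eq_prod, Finset.prod_mul_distrib]
  simp

/-! ### Integrals depending on a parameter -/

lemma integrable_bounded_mul {d : ℕ} {g w : (Fin d → ℝ) → ℝ} {C : ℝ}
    (hg : Continuous g) (hb : ∀ u, |g u| ≤ C) (hw : Integrable w) :
    Integrable (fun u => g u * w u) :=
  hw.bdd_mul hg.aestronglyMeasurable (ae_of_all _ hb)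

lemma continuous_integral_mul {d : ℕ} {G : (Fin d → ℝ) → (Fin d → ℝ) → ℝ}
    {w : (Fin d → ℝ) → ℝ} {C : ℝ}
    (hG : Continuous (fun p : (Fin d → ℝ) × (Fin d → ℝ) => G p.1 p.2))
    (hb : ∀ x u, |G x u| ≤ C) (hw : Integrable w) :
    Continuous (fun x => ∫ u, G x u * w u) := by
  refine continuous_of_dominated (bound := fun u => C * |w u|) (fun x => ?_) (fun x => ?_)
    (hw.abs.const_mul C) ?_
  · exact (integrable_bounded_mul (C := C) (by fun_prop) (hb x) hw).aestronglyMeasurable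
  · refine ae_of_all _ fun u => ?_
    rw [Real.norm_eq_abs, abs_mul]
    exact mul_le_mul_of_nonneg_right (hb x u) (abs_nonneg _)
  · exact ae_of_all _ fun u => by fun_prop

lemma isFiniteMeasure_cube (d : ℕ) :
    IsFiniteMeasure ((volume : Measure (Fin d → ℝ)).restrict (cube d)) :=
  ⟨by simpa [cube] using (isCompact_Icc (a := (0 : Fin d → ℝ)) (b := 1)).measure_lt_top⟩

/-- Differentiation in time under the integral over the torus. -/
lemma hasDerivAt_integral_cube {d : ℕ} {p q : ℝ → (Fin d → ℝ) → ℝ} {K : ℝ} (t : ℝ)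
    (hp : ∀ s, Continuous (p s)) (hq : ∀ s, Continuous (q s))
    (hb : ∀ s x, |q s x| ≤ K) (hd : ∀ s x, HasDerivAt (fun r => p r x) (q s x) s) :
    HasDerivAt (fun s => ∫ x in cube d, p s x) (∫ x in cube d, q t x) t := by
  have := isFiniteMeasure_cube d
  have hint : Integrable (p t) (volume.restrict (cube d)) :=
    (hp t).continuousOn.integrableOn_compact isCompact_Icc
  exact (hasDerivAt_integral_of_dominated_loc_of_deriv_le (bound := fun _ => K) univ_mem
    (Eventually.of_forall fun s => (hp s).aestronglyMeasurable)
    hint (hq t).aestronglyMeasurable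
    (ae_of_all _ fun x s _ => hb s x) (integrable_const K)
    (ae_of_all _ fun x s _ => hd s x)).2

/-! ### Consequences of regularity -/

/-- The time-dependent function `h` as a function on the product space `ℝ × ℝ^d × ℝ^d`. -/
def unc (d : ℕ) (h : ℝ → (Fin d → ℝ) → (Fin d → ℝ) → ℝ)
    (q : ℝ × (Fin d → ℝ) × (Fin d → ℝ)) : ℝ := h q.1 q.2.1 q.2.2

/-- The partial derivative `∂_t h`. -/
def dtime (d : ℕ) (h : ℝ → (Fin d → ℝ) → (Fin d → ℝ) → ℝ) (t : ℝ) (x v : Fin d → ℝ) : ℝ :=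
  fderiv ℝ (unc d h) (t, x, v) (1, 0, 0)

/-- The differential of `h` in the position variable, as a continuous linear form. -/
def dspace (d : ℕ) (h : ℝ → (Fin d → ℝ) → (Fin d → ℝ) → ℝ) (t : ℝ) (x v : Fin d → ℝ) :
    (Fin d → ℝ) →L[ℝ] ℝ :=
  (fderiv ℝ (unc d h) (t, x, v)).comp
    ((ContinuousLinearMap.inr ℝ ℝ ((Fin d → ℝ) × (Fin d → ℝ))).comp
      (ContinuousLinearMap.inl ℝ (Fin d → ℝ) (Fin d → ℝ)))

section

variable {d : ℕ} {h : ℝ → (Fin d → ℝ) → (Fin d → ℝ) → ℝ}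

lemma Regular.differentiable (hreg : Regular d h) : Differentiable ℝ (unc d h) :=
  hreg.1.differentiable (by simp)

lemma Regular.continuous (hreg : Regular d h) : Continuous (unc d h) :=
  hreg.1.continuous

lemma Regular.continuous_fderiv (hreg : Regular d h) : Continuous (fderiv ℝ (unc d h)) :=
  hreg.1.continuous_fderiv (by simp)

lemma Regular.continuous_slice (hreg : Regular d h) (t : ℝ) :
    Continuous (fun p : (Fin d → ℝ) × (Fin d → ℝ) => h t p.1 p.2) :=
  hreg.continuous.comp (f := fun p : (Fin d → ℝ) × (Fin d → ℝ) => (t, p.1, p.2)) (by fun_prop)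

lemma Regular.exists_fderiv_bound (hreg : Regular d h) :
    ∃ C, 0 ≤ C ∧ ∀ q, ‖fderiv ℝ (unc d h) q‖ ≤ C := by
  obtain ⟨C, hC⟩ := hreg.2.2.2 1
  refine ⟨C, (norm_nonneg _).trans (hC 0), fun q => ?_⟩
  rw [← norm_iteratedFDeriv_one]
  exact hC q

lemma Regular.hasDerivAt_time (hreg : Regular d h) (t : ℝ) (x v : Fin d → ℝ) :
    HasDerivAt (fun s => h s x v) (dtime d h t x v) t :=
  HasFDerivAt.comp_hasDerivAt (l := unc d h) (f := fun s : ℝ => (s, x, v)) t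
    (hreg.differentiable (t, x, v)).hasFDerivAt
    ((hasDerivAt_id t).prodMk (hasDerivAt_const t (x, v)))

lemma Regular.hasFDerivAt_space (hreg : Regular d h) (t : ℝ) (x v : Fin d → ℝ) :
    HasFDerivAt (fun y => h t y v) (dspace d h t x v) x := by
  have hin : HasFDerivAt (fun y : Fin d → ℝ => (t, y, v))
      ((ContinuousLinearMap.inr ℝ ℝ ((Fin d → ℝ) × (Fin d → ℝ))).comp
        (ContinuousLinearMap.inl ℝ (Fin d → ℝ) (Fin d → ℝ))) x :=
    (hasFDerivAt_prodMk_right t (x, v)).comp x (hasFDerivAt_prodMk_left x v)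
  exact HasFDerivAt.comp (g := unc d h) x (hreg.differentiable (t, x, v)).hasFDerivAt hin

lemma Regular.gradx_eq (hreg : Regular d h) (t : ℝ) (x v : Fin d → ℝ) (i : Fin d) :
    gradx d (h t) x v i = dspace d h t x v (Pi.single i 1) := by
  rw [gradx, (hreg.hasFDerivAt_space t x v).fderiv]

lemma Regular.continuous_dtime (hreg : Regular d h) (t : ℝ) :
    Continuous (fun p : (Fin d → ℝ) × (Fin d → ℝ) => dtime d h t p.1 p.2) :=
  (hreg.continuous_fderiv.comp
    (f := fun p : (Fin d → ℝ) × (Fin d → ℝ) => (t, p.1, p.2)) (by fun_prop)).clm_apply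
    continuous_const

lemma Regular.continuous_dspace (hreg : Regular d h) (t : ℝ) (x : Fin d → ℝ) :
    Continuous (fun v => dspace d h t x v) :=
  (hreg.continuous_fderiv.comp
    (f := fun v : Fin d → ℝ => (t, x, v)) (by fun_prop)).clm_comp continuous_const

lemma Regular.exists_dtime_bound (hreg : Regular d h) :
    ∃ C, ∀ t x v, |dtime d h t x v| ≤ C := by
  obtain ⟨C, -, hC⟩ := hreg.exists_fderiv_bound
  exact ⟨C * ‖((1 : ℝ), (0 : Fin d → ℝ), (0 : Fin d → ℝ))‖,
    fun t x v => ContinuousLinearMap.le_of_opNorm_le _ (hC _) _⟩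

lemma Regular.exists_dspace_bound (hreg : Regular d h) :
    ∃ C, 0 ≤ C ∧ ∀ t x v, ‖dspace d h t x v‖ ≤ C := by
  obtain ⟨C, hC0, hC⟩ := hreg.exists_fderiv_bound
  exact ⟨_, by positivity, fun t x v => (ContinuousLinearMap.opNorm_comp_le _ _).trans
    (mul_le_mul_of_nonneg_right (hC _) (norm_nonneg _))⟩

lemma Regular.exists_bound (hreg : Regular d h) : ∃ C, ∀ t x v, |h t x v| ≤ C := by
  obtain ⟨c, C, hc, hb⟩ := hreg.2.2.1
  exact ⟨C, fun t x v => by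
    rw [abs_of_pos (hc.trans_le (hb t x v).1)]
    exact (hb t x v).2⟩

/-! ### The local density and its conservation law -/

lemma Regular.integrable_mul (hreg : Regular d h) {w : (Fin d → ℝ) → ℝ} (hw : Integrable w)
    (t : ℝ) (x : Fin d → ℝ) : Integrable (fun v => h t x v * w v) := by
  obtain ⟨C, hC⟩ := hreg.exists_bound
  have := hreg.continuous_slice t
  exact integrable_bounded_mul (C := C) (by fun_prop) (hC t x) hw

lemma Regular.proj_bounds (hreg : Regular d h) :
    ∃ c C : ℝ, 0 < c ∧ ∀ t x, c ≤ proj d (h t) x ∧ proj d (h t) x ≤ C := by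
  obtain ⟨c, C, hc, hb⟩ := hreg.2.2.1
  have key : ∀ a : ℝ, ∫ v, a * gauss d v = a := fun a => by
    rw [integral_const_mul, integral_gauss, mul_one]
  refine ⟨c, C, hc, fun t x => ⟨?_, ?_⟩⟩
  · rw [← key c]
    exact integral_mono ((integrable_gauss d).const_mul c)
      (hreg.integrable_mul (integrable_gauss d) t x)
      fun v => mul_le_mul_of_nonneg_right (hb t x v).1 (gauss_nonneg d v)
  · rw [← key C]
    exact integral_mono (hreg.integrable_mul (integrable_gauss d) t x)
      ((integrable_gauss d).const_mul C)
      fun v => mul_le_mul_of_nonneg_right (hb t x v).2 (gauss_nonneg d v)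

lemma Regular.continuous_proj (hreg : Regular d h) (t : ℝ) : Continuous (proj d (h t)) := by
  obtain ⟨C, hC⟩ := hreg.exists_bound
  exact continuous_integral_mul (hreg.continuous_slice t) (hC t) (integrable_gauss d)

lemma Regular.continuous_proj_dtime (hreg : Regular d h) (t : ℝ) :
    Continuous (proj d (dtime d h t)) := by
  obtain ⟨C, hC⟩ := hreg.exists_dtime_bound
  exact continuous_integral_mul (hreg.continuous_dtime t) (hC t) (integrable_gauss d)

lemma Regular.exists_proj_dtime_bound (hreg : Regular d h) :
    ∃ C, ∀ t x, |proj d (dtime d h t) x| ≤ C := by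
  obtain ⟨C, hC⟩ := hreg.exists_dtime_bound
  refine ⟨C, fun t x => ?_⟩
  have hn := norm_integral_le_of_norm_le (f := fun v => dtime d h t x v * gauss d v)
    ((integrable_gauss d).const_mul C) (ae_of_all _ fun v => by
      rw [norm_mul, Real.norm_of_nonneg (gauss_nonneg d v)]
      exact mul_le_mul_of_nonneg_right (hC t x v) (gauss_nonneg d v))
  rwa [integral_const_mul, integral_gauss, mul_one] at hn

lemma Regular.hasDerivAt_proj (hreg : Regular d h) (t : ℝ) (x : Fin d → ℝ) :
    HasDerivAt (fun s => proj d (h s) x) (proj d (dtime d h t) x) t := by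
  obtain ⟨C, hC⟩ := hreg.exists_dtime_bound
  have hct := hreg.continuous_dtime t
  refine (hasDerivAt_integral_of_dominated_loc_of_deriv_le
    (F := fun s v => h s x v * gauss d v) (F' := fun s v => dtime d h s x v * gauss d v)
    (bound := fun v => C * gauss d v) univ_mem
    (Eventually.of_forall fun s =>
      (hreg.integrable_mul (integrable_gauss d) s x).aestronglyMeasurable)
    (hreg.integrable_mul (integrable_gauss d) t x)
    (integrable_bounded_mul (C := C) (by fun_prop) (hC t x)
      (integrable_gauss d)).aestronglyMeasurable
    (ae_of_all _ fun v s _ => ?_) ((integrable_gauss d).const_mul C)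
    (ae_of_all _ fun v s _ => (hreg.hasDerivAt_time s x v).mul_const _)).2
  rw [norm_mul, Real.norm_of_nonneg (gauss_nonneg d v)]
  exact mul_le_mul_of_nonneg_right (hC s x v) (gauss_nonneg d v)

lemma Regular.integrable_gradx_mul (hreg : Regular d h) (t : ℝ) (x : Fin d → ℝ) (i : Fin d) :
    Integrable (fun v => dspace d h t x v (Pi.single i 1) * (v i * gauss d v)) := by
  obtain ⟨C, -, hC⟩ := hreg.exists_dspace_bound
  exact integrable_bounded_mul (C := C * ‖(Pi.single i 1 : Fin d → ℝ)‖)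
    ((hreg.continuous_dspace t x).clm_apply continuous_const)
    (fun v => ContinuousLinearMap.le_of_opNorm_le _ (hC t x v) _)
    (integrable_coord_mul_gauss d i)

/-- The `i`-th term of `∇_x · U`, computed by differentiating under the integral; the
dominating function is a multiple of `|v i| ℳ(v)`. -/
lemma Regular.fderiv_Uvec (hreg : Regular d h) (t : ℝ) (x : Fin d → ℝ) (i : Fin d) :
    fderiv ℝ (fun y => Uvec d (h t) y i) x (Pi.single i 1) =
      ∫ v, dspace d h t x v (Pi.single i 1) * (v i * gauss d v) := by
  obtain ⟨C, hC0, hC⟩ := hreg.exists_dspace_bound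
  have hw := integrable_coord_mul_gauss d i
  have hmeas : AEStronglyMeasurable (fun v => (v i * gauss d v) • dspace d h t x v) volume :=
    hw.aestronglyMeasurable.smul (hreg.continuous_dspace t x).aestronglyMeasurable
  have hbd : ∀ (v y : Fin d → ℝ),
      ‖(v i * gauss d v) • dspace d h t y v‖ ≤ C * |v i * gauss d v| := fun v y => by
    rw [norm_smul, mul_comm, Real.norm_eq_abs]
    exact mul_le_mul_of_nonneg_right (hC t y v) (abs_nonneg _)
  have hder := hasFDerivAt_integral_of_dominated_of_fderiv_le (𝕜 := ℝ) (x₀ := x)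
    (F := fun y v => h t y v * (v i * gauss d v))
    (F' := fun y v => (v i * gauss d v) • dspace d h t y v)
    (bound := fun v => C * |v i * gauss d v|) univ_mem
    (Eventually.of_forall fun y => (hreg.integrable_mul hw t y).aestronglyMeasurable)
    (hreg.integrable_mul hw t x) hmeas (ae_of_all _ fun v y _ => hbd v y)
    (hw.abs.const_mul C)
    (ae_of_all _ fun v y _ => (hreg.hasFDerivAt_space t y v).mul_const _)
  have hU : (fun y => Uvec d (h t) y i) = fun y => ∫ v, h t y v * (v i * gauss d v) := by
    funext y
    simp only [Uvec]
    congr 1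
    funext v
    ring
  rw [hU, hder.fderiv, ContinuousLinearMap.integral_apply
    ((hw.abs.const_mul C).mono' hmeas (ae_of_all _ fun v => hbd v x))]
  congr 1
  funext v
  simp [mul_comm]

/-- Conservation of mass `∂_t Πh + ∇_x · U = 0`: the collision operator `λ(Πh - h)` has zero
Gaussian average. -/
lemma Regular.proj_dtime_eq (hreg : Regular d h) {lam : ℝ} (hpde : SolvesLRB d lam h)
    {t : ℝ} (ht : 0 ≤ t) (x : Fin d → ℝ) :
    proj d (dtime d h t) x = -divU d (h t) x := by
  have hg := integrable_gauss d
  have hI := hreg.integrable_mul hg t x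
  have hdiff : Integrable
      (fun v => proj d (h t) x * gauss d v - h t x v * gauss d v) := (hg.const_mul _).sub hI
  have hpt : ∀ v, dtime d h t x v * gauss d v =
      lam * (proj d (h t) x * gauss d v - h t x v * gauss d v) -
        ∑ i, dspace d h t x v (Pi.single i 1) * (v i * gauss d v) := fun v => by
    have he := hpde t x v ht
    rw [(hreg.hasDerivAt_time t x v).deriv] at he
    simp only [dotp, hreg.gradx_eq] at he
    have hs : ∑ i, dspace d h t x v (Pi.single i 1) * (v i * gauss d v) =
        (∑ i, v i * dspace d h t x v (Pi.single i 1)) * gauss d v := by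
      rw [Finset.sum_mul]
      exact Finset.sum_congr rfl fun i _ => by ring
    rw [hs, eq_sub_of_add_eq he]
    ring
  rw [proj]
  simp_rw [hpt]
  rw [integral_sub (hdiff.const_mul _)
      (integrable_finsetSum _ fun i _ => hreg.integrable_gradx_mul t x i),
    integral_const_mul, integral_sub (hg.const_mul _) hI, integral_const_mul, integral_gauss,
    integral_finsetSum _ fun i _ => hreg.integrable_gradx_mul t x i]
  simp only [divU, hreg.fderiv_Uvec]
  simp [proj]

end

/-- Derivative of the projected entropy along the flow of the linear relaxation
Boltzmann equation: `(d/dt) ∫ Πh_t log Πh_t dx = - ∫ log(Πh_t) ∇_x · U_t dx`. -/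
theorem projected_entropy_derivative
    (d : ℕ) (hd : 1 ≤ d) (lam : ℝ) (hlam : 0 < lam)
    (h : ℝ → (Fin d → ℝ) → (Fin d → ℝ) → ℝ)
    (hreg : Regular d h)
    (hmass : ∀ t, 0 ≤ t → intMu d (h t) = 1)
    (hpde : SolvesLRB d lam h) :
    ∀ t : ℝ, 0 ≤ t →
      HasDerivAt (fun s => HPi d (h s))
        (-∫ x in cube d, Real.log (proj d (h t) x) * divU d (h t) x) t := by
  intro t ht
  obtain ⟨c, C, hc, hb⟩ := hreg.proj_bounds
  obtain ⟨K, hK⟩ := hreg.exists_proj_dtime_bound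
  have hpos : ∀ s x, 0 < proj d (h s) x := fun s x => hc.trans_le (hb s x).1
  have hlogc : ∀ s, Continuous (fun x => Real.log (proj d (h s) x)) := fun s =>
    (hreg.continuous_proj s).log fun x => (hpos s x).ne'
  have hqc := hreg.continuous_proj_dtime
  have hlogb : ∀ s x, |Real.log (proj d (h s) x) + 1| ≤ |Real.log c| + |Real.log C| + 1 := by
    intro s x
    have h1 := Real.log_le_log hc (hb s x).1
    have h2 := Real.log_le_log (hpos s x) (hb s x).2
    rw [abs_le]
    constructor <;>
      linarith [neg_abs_le (Real.log c), le_abs_self (Real.log C), abs_nonneg (Real.log c),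
        abs_nonneg (Real.log C)]
  have hent := hasDerivAt_integral_cube (d := d) t
    (p := fun s x => proj d (h s) x * Real.log (proj d (h s) x))
    (q := fun s x => (Real.log (proj d (h s) x) + 1) * proj d (dtime d h s) x)
    (K := (|Real.log c| + |Real.log C| + 1) * K)
    (fun s => (hreg.continuous_proj s).mul (hlogc s))
    (fun s => ((hlogc s).add continuous_const).mul (hqc s))
    (fun s x => by
      rw [abs_mul]
      exact mul_le_mul (hlogb s x) (hK s x) (abs_nonneg _) (by positivity))
    (fun s x => HasDerivAt.comp (h₂ := fun y : ℝ => y * Real.log y) s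
      (Real.hasDerivAt_mul_log (hpos s x).ne') (hreg.hasDerivAt_proj s x))
  have hmassd := hasDerivAt_integral_cube (d := d) t (p := fun s x => proj d (h s) x)
    (q := fun s x => proj d (dtime d h s) x) hreg.continuous_proj hqc hK hreg.hasDerivAt_proj
  -- The mass is known to be constant only for nonnegative times, so its derivative is identified
  -- through the right derivative; this also covers `t = 0`.
  have hzero : ∫ x in cube d, proj d (dtime d h t) x = 0 :=
    (uniqueDiffWithinAt_Ici t).eq_deriv _ hmassd.hasDerivWithinAt
      ((hasDerivWithinAt_const t (Set.Ici t) (1 : ℝ)).congr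
        (fun s hs => hmass s (ht.trans hs)) (hmass t ht))
  have hint : ∀ f : (Fin d → ℝ) → ℝ, Continuous f → IntegrableOn f (cube d) := fun f hf =>
    hf.continuousOn.integrableOn_compact isCompact_Icc
  refine hent.congr_deriv ?_
  simp only [add_mul, one_mul]
  rw [integral_add
      (hint (fun x => Real.log (proj d (h t) x) * proj d (dtime d h t) x)
        ((hlogc t).mul (hqc t))) (hint _ (hqc t)), hzero, add_zero,
    ← integral_neg]
  congr 1
  funext x
  rw [hreg.proj_dtime_eq hpde ht]
  ring
end
end
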